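/- arXiv:2212.01919 — 2 statements merged into one kernel-verified Lean document; each statement's English description precedes it below -/
import Mathlib

section
/- Let δ be a formal vector field on Ô_n = ℂ[[x_1,...,x_n]] with δ(0) = 0 and let w = (w_1,...,w_n) ∈ ℂ^n be the eigenvalues of its linear part. Then there exists a formal change of coordinates after which δ = δ_S + δ_N, where δ_S = Σ_{i=1}^n w_i x_i ∂_{x_i} and δ_N is a formal vector field with nilpotent linear part satisfying [δ_S, δ_N] = 0. -/
set_option maxHeartbeats 1000000
set_option synthInstance.maxHeartbeats 1000000

noncomputable section

/-- The ring `Ô_n = ℂ[[x₁, …, xₙ]]` of formal power series. -/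
abbrev FPS (n : ℕ) : Type := MvPowerSeries (Fin n) ℂ

/-- The `i`-th partial derivative of a formal power series. -/
def fpd {n : ℕ} (i : Fin n) (f : FPS n) : FPS n :=
  fun m => ((m i : ℂ) + 1) * MvPowerSeries.coeff (m + Finsupp.single i 1) f

/-- The action `δ(f) = Σ aᵢ ∂f/∂xᵢ` of a formal vector field `δ = Σ aᵢ ∂ᵢ`
(given by its coefficients `aᵢ ∈ Ô_n`) on a formal power series `f`. -/
def applyPS {n : ℕ} (δ : Fin n → FPS n) (f : FPS n) : FPS n := ∑ i, δ i * fpd i f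

/-- The linear part `j¹δ` of a formal vector field, as the matrix `(∂δⱼ/∂xᵢ)(0)`. -/
def linPartPS {n : ℕ} (δ : Fin n → FPS n) : Matrix (Fin n) (Fin n) ℂ :=
  Matrix.of fun i j => MvPowerSeries.coeff (Finsupp.single i 1) (δ j)

/-- The semisimple (Euler) vector field `δ_S = Σ wᵢ xᵢ ∂ᵢ` attached to weights `w`. -/
def eulerPS {n : ℕ} (w : Fin n → ℂ) : Fin n → FPS n :=
  fun j => MvPowerSeries.C (w j) * MvPowerSeries.X j

/-- `δ(0) = 0`: all coefficients of the vector field lie in the maximal ideal. -/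
def VanishAt0 {n : ℕ} (δ : Fin n → FPS n) : Prop :=
  ∀ j, MvPowerSeries.constantCoeff (δ j) = 0

/-- Vanishing of the Lie bracket `[δ, η] = 0` of two formal vector fields,
componentwise: `δ(ηⱼ) - η(δⱼ) = 0` for all `j`. -/
def CommutePS {n : ℕ} (δ η : Fin n → FPS n) : Prop :=
  ∀ j, applyPS δ (η j) = applyPS η (δ j)

open MvPowerSeries in
/-- The filtration by order. -/
def FF (n k : ℕ) : Submodule ℂ (FPS n) where
  carrier := {f | ∀ m : Fin n →₀ ℕ, m.degree < k → coeff m f = 0}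
  zero_mem' := by intro m _; simp
  add_mem' := by
    intro a b ha hb m hm
    simp [ha m hm, hb m hm]
  smul_mem' := by
    intro c a ha m hm
    simp [ha m hm]

open MvPowerSeries

theorem mem_FF {n k : ℕ} {f : FPS n} : f ∈ FF n k ↔ ∀ m : Fin n →₀ ℕ, m.degree < k → coeff m f = 0 :=
  Iff.rfl

theorem mem_FF_order {n k : ℕ} {f : FPS n} : f ∈ FF n k ↔ (k : ℕ∞) ≤ f.order := by
  constructor
  · intro h
    exact nat_le_order h
  · intro h m hm
    apply coeff_of_lt_order
    exact lt_of_lt_of_le (by exact_mod_cast hm) h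

theorem FF_zero {n : ℕ} (f : FPS n) : f ∈ FF n 0 := by
  intro m hm
  omega

theorem FF_anti {n k l : ℕ} (h : k ≤ l) {f : FPS n} (hf : f ∈ FF n l) : f ∈ FF n k :=
  fun m hm => hf m (lt_of_lt_of_le hm h)

theorem FF_mul {n k l : ℕ} {f g : FPS n} (hf : f ∈ FF n k) (hg : g ∈ FF n l) :
    f * g ∈ FF n (k + l) := by
  rw [mem_FF_order] at *
  push_cast
  exact (add_le_add hf hg).trans le_order_mul

theorem FF_mul_right {n k : ℕ} {f g : FPS n} (hf : f ∈ FF n k) : f * g ∈ FF n k := by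
  simpa using FF_mul hf (FF_zero g)

theorem FF_mul_left {n k : ℕ} {f g : FPS n} (hf : f ∈ FF n k) : g * f ∈ FF n k := by
  rw [mul_comm]; exact FF_mul_right hf

theorem FF_one {n : ℕ} {f : FPS n} : f ∈ FF n 1 ↔ constantCoeff f = 0 := by
  constructor
  · intro h
    rw [← coeff_zero_eq_constantCoeff_apply]
    exact h 0 (by simp)
  · intro h m hm
    have : m = 0 := by
      rw [← Finsupp.degree_eq_zero_iff]; omega
    rw [this, coeff_zero_eq_constantCoeff_apply, h]

theorem FF_eq_zero {n : ℕ} {f : FPS n} (h : ∀ k, f ∈ FF n k) : f = 0 := by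
  ext m
  simpa using h (m.degree + 1) m (by omega)

theorem FF_limit {n : ℕ} (f : ℕ → FPS n) (hf : ∀ k, f (k + 1) - f k ∈ FF n k) :
    ∃ y, ∀ k, y - f k ∈ FF n k := by
  obtain ⟨y, hy⟩ : ∃ y : FPS n, ∀ m, coeff m y = coeff m (f (m.degree + 1)) :=
    ⟨fun m => coeff m (f (m.degree + 1)), fun m => rfl⟩
  refine ⟨y, fun k m hm => ?_⟩
  have key : ∀ l, m.degree + 1 ≤ l → coeff m (f l) = coeff m (f (m.degree + 1)) := by
    intro l hl
    induction l, hl using Nat.le_induction with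
    | base => rfl
    | succ l hl ih =>
      rw [← ih, ← sub_eq_zero, ← map_sub]
      exact hf l m (by omega)
  rw [map_sub, key k (by omega), hy, sub_self]

/-- finite set of exponents of degree `< k`. -/
theorem fin_deg (n k : ℕ) : {m : Fin n →₀ ℕ | m.degree < k}.Finite :=
  (Finsupp.finite_of_degree_le k).subset fun m (hm : m.degree < k) => hm.le

def SS (n k : ℕ) : Finset (Fin n →₀ ℕ) := (fin_deg n k).toFinset

theorem mem_SS {n k : ℕ} {m : Fin n →₀ ℕ} : m ∈ SS n k ↔ m.degree < k := by
  simp [SS]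

theorem coeff_sum_mono {n : ℕ} (S : Finset (Fin n →₀ ℕ)) (c : (Fin n →₀ ℕ) → ℂ) (m : Fin n →₀ ℕ) :
    coeff m (∑ d ∈ S, c d • (monomial d (1 : ℂ) : FPS n)) = if m ∈ S then c m else 0 := by
  classical
  rw [map_sum]
  simp [coeff_monomial]

theorem trunc_FF {n : ℕ} (k : ℕ) (f : FPS n) :
    f - ∑ d ∈ SS n k, coeff d f • (monomial d (1 : ℂ) : FPS n) ∈ FF n k := by
  intro m hm
  rw [map_sub, coeff_sum_mono, if_pos (mem_SS.2 hm), sub_self]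

theorem mono_ind {n : ℕ} {P : (Fin n →₀ ℕ) → Prop} (h0 : P 0)
    (h1 : ∀ m i, P m → P (m + Finsupp.single i 1)) (m : Fin n →₀ ℕ) : P m := by
  have : ∀ k, ∀ m : Fin n →₀ ℕ, m.degree = k → P m := by
    intro k
    induction k with
    | zero =>
      intro m hm
      rw [Finsupp.degree_eq_zero_iff] at hm
      rwa [hm]
    | succ k ih =>
      intro m hm
      have hne : m ≠ 0 := by
        rintro rfl; simp at hm
      obtain ⟨i, hi⟩ := Finsupp.ne_iff.1 hne
      have hle : Finsupp.single i 1 ≤ m := by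
        rw [Finsupp.single_le_iff]
        exact Nat.one_le_iff_ne_zero.2 hi
      have h := tsub_add_cancel_of_le hle
      rw [← h]
      apply h1
      apply ih
      have h2 := congrArg Finsupp.degree h
      rw [map_add, Finsupp.degree_single] at h2
      omega
  exact this _ m rfl

theorem mono_succ {n : ℕ} (m : Fin n →₀ ℕ) (i : Fin n) :
    (monomial (m + Finsupp.single i 1) (1 : ℂ) : FPS n) = monomial m 1 * X i := by
  rw [X_def, monomial_mul_monomial, one_mul]

theorem mono_zero {n : ℕ} : (monomial (0 : Fin n →₀ ℕ) (1 : ℂ) : FPS n) = 1 := rfl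

theorem X_mem {n : ℕ} (i : Fin n) : (X i : FPS n) ∈ FF n 1 := by
  rw [FF_one]; simp

theorem mono_mem {n : ℕ} (m : Fin n →₀ ℕ) : (monomial m (1 : ℂ) : FPS n) ∈ FF n m.degree := by
  classical
  intro d hd
  rw [coeff_monomial, if_neg]
  rintro rfl
  omega

/-- A filtered linear map killing monomials is zero. -/
theorem lin_ext {n : ℕ} (E : FPS n →ₗ[ℂ] FPS n) (hE : ∀ k, ∀ f ∈ FF n (k + 1), E f ∈ FF n k)
    (h : ∀ m, E (monomial m 1) = 0) : E = 0 := by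
  ext1 f
  refine FF_eq_zero fun k => ?_
  have h1 := hE k _ (trunc_FF (k + 1) f)
  rw [map_sub, map_sum] at h1
  simpa [h] using h1

/-- A triangular filtered linear map is surjective. -/
theorem tri_surj {n : ℕ} (U : FPS n →ₗ[ℂ] FPS n)
    (hU : ∀ k, ∀ f ∈ FF n k, U f - f ∈ FF n (k + 1)) : Function.Surjective U := by
  intro g
  let R : FPS n →ₗ[ℂ] FPS n := LinearMap.id - U
  have hR : ∀ k, ∀ f ∈ FF n k, R f ∈ FF n (k + 1) := by
    intro k f hf
    have := (FF n (k+1)).neg_mem (hU k f hf)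
    simpa [R] using this
  let s : ℕ → FPS n := fun k => Nat.rec 0 (fun _ a => g + R a) k
  have hs0 : s 0 = 0 := rfl
  have hs : ∀ k, s (k + 1) = g + R (s k) := fun k => rfl
  have hd : ∀ k, s (k + 1) - s k ∈ FF n k := by
    intro k
    induction k with
    | zero => exact FF_zero _
    | succ k ih =>
      have := hR k _ ih
      rw [hs (k+1)]
      nth_rw 2 [hs k]
      rw [map_sub] at this
      simpa using this
  obtain ⟨y, hy⟩ := FF_limit s hd
  refine ⟨y, ?_⟩
  rw [← sub_eq_zero]
  refine FF_eq_zero fun k => ?_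
  have h1 := hR k _ (hy k)
  have h2 := hy (k + 1)
  rw [hs] at h2
  have h3 := (FF n (k+1)).sub_mem h1 h2
  have h4 : R (y - s k) - (y - (g + R (s k))) = -(U y - g) := by
    simp only [R, map_sub, LinearMap.sub_apply, LinearMap.id_apply]
    abel
  rw [h4] at h3
  exact FF_anti (Nat.le_succ k) ((FF n (k+1)).neg_mem_iff.1 h3)

theorem tri_mem {n : ℕ} (U : FPS n →ₗ[ℂ] FPS n)
    (hU : ∀ k, ∀ f ∈ FF n k, U f - f ∈ FF n (k + 1)) (k : ℕ) (f : FPS n) (hf : U f ∈ FF n k) :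
    f ∈ FF n k := by
  have : ∀ l, l ≤ k → f ∈ FF n l := by
    intro l
    induction l with
    | zero => intro _; exact FF_zero f
    | succ l ih =>
      intro hl
      have h1 := hU l f (ih (by omega))
      have h2 := (FF n (l+1)).sub_mem (FF_anti hl hf) h1
      simpa using h2
  exact this k le_rfl

/-- Substitution. -/
theorem exists_subst {n : ℕ} (y : Fin n → FPS n) (hy : ∀ j, y j ∈ FF n 1) :
    ∃ Ψ : FPS n →ₐ[ℂ] FPS n, (∀ j, Ψ (X j) = y j) ∧ ∀ k, ∀ f ∈ FF n k, Ψ f ∈ FF n k := by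
  have hs : HasSubst y := hasSubst_of_constantCoeff_zero fun j => FF_one.1 (hy j)
  refine ⟨substAlgHom hs, fun j => substAlgHom_X hs j, fun k f hf => ?_⟩
  rw [mem_FF_order] at *
  rw [substAlgHom_apply]
  refine le_trans ?_ (le_order_subst hs f)
  have h1 : (1 : ℕ∞) ≤ ⨅ i, (y i).order := by
    refine le_iInf fun i => ?_
    have := mem_FF_order.1 (hy i)
    simpa using this
  calc (k : ℕ∞) = 1 * k := by simp
    _ ≤ _ := mul_le_mul' h1 hf

theorem hom_ext {n : ℕ} (A B : FPS n →ₐ[ℂ] FPS n) (hA : ∀ k, ∀ f ∈ FF n k, A f ∈ FF n k)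
    (hB : ∀ k, ∀ f ∈ FF n k, B f ∈ FF n k) (h : ∀ j, A (X j) = B (X j)) : A = B := by
  have := lin_ext (A.toLinearMap - B.toLinearMap) (fun k f hf => by
    have hf := FF_anti (Nat.le_succ k) hf
    exact (FF n k).sub_mem (hA k f hf) (hB k f hf)) (fun m => by
    induction m using mono_ind with
    | h0 => rw [mono_zero]; simp
    | h1 m i ih =>
      rw [LinearMap.sub_apply, sub_eq_zero] at *
      simp only [AlgHom.toLinearMap_apply] at *
      rw [mono_succ, map_mul, map_mul, ih, h])
  ext1 f
  have h2 := congrArg (fun L => L f) this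
  simpa [sub_eq_zero] using h2

theorem unip {n : ℕ} (U : FPS n →ₐ[ℂ] FPS n) (hU : ∀ k, ∀ f ∈ FF n k, U f ∈ FF n k)
    (h : ∀ j, U (X j) - X j ∈ FF n 2) (k : ℕ) (f : FPS n) (hf : f ∈ FF n k) :
    U f - f ∈ FF n (k + 1) := by
  have hm : ∀ m : Fin n →₀ ℕ, U (monomial m 1) - monomial m 1 ∈ FF n (m.degree + 1) := by
    intro m
    induction m using mono_ind with
    | h0 => rw [mono_zero]; simp
    | h1 m i ih =>
      rw [mono_succ, map_mul]
      have e : U (monomial m 1) * U (X i) - monomial m 1 * X i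
          = (U (monomial m 1) - monomial m 1) * U (X i) + monomial m 1 * (U (X i) - X i) := by ring
      rw [e, map_add, Finsupp.degree_single]
      refine (FF n _).add_mem (FF_mul ih (hU 1 _ (X_mem i))) ?_
      have := FF_mul (mono_mem m) (h i)
      exact FF_anti (by omega) this
  have h1 := trunc_FF (k + 1) f
  have h2 := hU _ _ h1
  have h3 := (FF n _).sub_mem h2 h1
  rw [map_sub, map_sum] at h3
  have h4 : ∑ d ∈ SS n (k+1), coeff d f • (U (monomial d 1) - monomial d 1) ∈ FF n (k + 1) := by
    refine Submodule.sum_mem _ fun d hd => ?_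
    rw [mem_SS] at hd
    by_cases hdk : d.degree < k
    · rw [hf d hdk, zero_smul]; exact (FF n _).zero_mem
    · have : d.degree = k := by omega
      have := hm d
      rw [‹d.degree = k›] at this
      exact (FF n _).smul_mem _ this
  have h5 := (FF n _).add_mem h3 h4
  convert h5 using 1
  simp only [smul_sub, Finset.sum_sub_distrib, map_smul]
  abel

/-- Vector field as derivation. -/
def vf {n : ℕ} (δ : Fin n → FPS n) : Derivation ℂ (FPS n) (FPS n) := ∑ i, δ i • pderiv ℂ i

theorem fpd_eq {n : ℕ} (i : Fin n) (f : FPS n) : fpd i f = pderiv ℂ i f := by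
  ext m
  rw [coeff_pderiv, mul_comm]
  rfl

theorem vf_apply {n : ℕ} (δ : Fin n → FPS n) (f : FPS n) :
    vf δ f = ∑ i, δ i * pderiv ℂ i f := by
  simp only [vf]
  rw [← Derivation.coeFnAddMonoidHom_apply, map_sum, Finset.sum_apply]
  simp

theorem applyPS_eq {n : ℕ} (δ : Fin n → FPS n) (f : FPS n) : applyPS δ f = vf δ f := by
  rw [vf_apply, applyPS]
  simp only [fpd_eq]

theorem vf_X {n : ℕ} (δ : Fin n → FPS n) (j : Fin n) : vf δ (X j) = δ j := by
  classical
  rw [vf_apply]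
  simp [pderiv_X, Pi.single_apply]

theorem pderiv_FF {n k : ℕ} (i : Fin n) (f : FPS n) (hf : f ∈ FF n (k + 1)) :
    pderiv ℂ i f ∈ FF n k := by
  intro m hm
  rw [coeff_pderiv, hf, zero_mul]
  rw [map_add, Finsupp.degree_single]
  omega

theorem vf_FF {n : ℕ} {δ : Fin n → FPS n} (h : VanishAt0 δ) (k : ℕ) (f : FPS n)
    (hf : f ∈ FF n k) : vf δ f ∈ FF n k := by
  rw [vf_apply]
  refine Submodule.sum_mem _ fun i _ => ?_
  cases k with
  | zero => exact FF_zero _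
  | succ k =>
    rw [add_comm]
    exact FF_mul (FF_one.2 (h i)) (pderiv_FF i f hf)

/-- the operator `δ - μ`. -/
def op {n : ℕ} (δ : Fin n → FPS n) (μ : ℂ) : Module.End ℂ (FPS n) :=
  (vf δ : FPS n →ₗ[ℂ] FPS n) - μ • (1 : Module.End ℂ (FPS n))

theorem op_apply {n : ℕ} (δ : Fin n → FPS n) (μ : ℂ) (f : FPS n) :
    op δ μ f = vf δ f - μ • f := by
  simp [op]

theorem op_FF {n : ℕ} {δ : Fin n → FPS n} (h : VanishAt0 δ) (μ : ℂ) (N k : ℕ) (f : FPS n)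
    (hf : f ∈ FF n k) : (op δ μ ^ N) f ∈ FF n k := by
  induction N with
  | zero => simpa using hf
  | succ N ih =>
    rw [pow_succ', Module.End.mul_apply, op_apply]
    exact (FF n k).sub_mem (vf_FF h k _ ih) ((FF n k).smul_mem _ ih)

theorem op_pow_vf {n : ℕ} (δ : Fin n → FPS n) (μ : ℂ) (N : ℕ) (f : FPS n) :
    (op δ μ ^ N) (vf δ f) = vf δ ((op δ μ ^ N) f) := by
  induction N with
  | zero => simp
  | succ N ih =>
    rw [pow_succ', Module.End.mul_apply, Module.End.mul_apply, ih, op_apply, op_apply, map_sub,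
      Derivation.map_smul]

theorem op_mul {n : ℕ} {δ : Fin n → FPS n} (h : VanishAt0 δ) (lam μ : ℂ) (k : ℕ) :
    ∀ s a b : ℕ, a + b = s → ∀ f g : FPS n, (op δ lam ^ a) f ∈ FF n k → (op δ μ ^ b) g ∈ FF n k →
      (op δ (lam + μ) ^ s) (f * g) ∈ FF n k := by
  intro s
  induction s with
  | zero =>
    intro a b hab f g hf hg
    obtain ⟨rfl, rfl⟩ : a = 0 ∧ b = 0 := by omega
    simp only [pow_zero, Module.End.one_apply] at *
    exact FF_mul_right hf
  | succ s ih =>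
    intro a b hab f g hf hg
    rcases a with _ | a
    · simp only [pow_zero, Module.End.one_apply] at hf
      exact op_FF h _ _ _ _ (FF_mul_right hf)
    rcases b with _ | b
    · simp only [pow_zero, Module.End.one_apply] at hg
      exact op_FF h _ _ _ _ (FF_mul_left hg)
    have e : op δ (lam + μ) (f * g) = (op δ lam f) * g + f * (op δ μ g) := by
      simp only [op_apply, Derivation.leibniz, smul_eq_mul, add_smul, sub_mul, mul_sub,
        smul_mul_assoc, mul_smul_comm]
      ring
    rw [pow_succ, Module.End.mul_apply, e, map_add]
    refine (FF n k).add_mem ?_ ?_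
    · refine ih a (b + 1) (by omega) _ _ ?_ hg
      rwa [pow_succ, Module.End.mul_apply] at hf
    · refine ih (a + 1) b (by omega) _ _ hf ?_
      rwa [pow_succ, Module.End.mul_apply] at hg

/-- The quotient by the filtration is finite-dimensional. -/
theorem quot_art (n k : ℕ) : IsArtinian ℂ (FPS n ⧸ FF n k) := by
  let L : FPS n →ₗ[ℂ] (SS n k → ℂ) := LinearMap.pi fun m => coeff m.1
  have hk : LinearMap.ker L = FF n k := by
    ext f
    rw [LinearMap.mem_ker, mem_FF]
    constructor
    · intro h m hm
      exact congrFun h ⟨m, mem_SS.2 hm⟩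
    · intro h
      ext m
      exact h m.1 (mem_SS.1 m.2)
  have : Module.Finite ℂ (FPS n ⧸ LinearMap.ker L) :=
    Module.Finite.equiv L.quotKerEquivRange.symm
  rw [hk] at this
  infer_instance

/-- Fitting step. -/
theorem fitting_step {n : ℕ} {δ : Fin n → FPS n} (h : VanishAt0 δ) (μ : ℂ) (k N : ℕ) (f : FPS n)
    (hf : (op δ μ ^ N) f ∈ FF n k) :
    ∃ g, g - f ∈ FF n k ∧ ∃ N', (op δ μ ^ N') g ∈ FF n (k + 1) := by
  have := quot_art n (k + 1)
  let T := op δ μ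
  let R : ℕ →o (Submodule ℂ (FPS n ⧸ FF n (k + 1)))ᵒᵈ :=
    { toFun := fun i => OrderDual.toDual (((FF n k).map (T ^ i)).map (FF n (k + 1)).mkQ)
      monotone' := by
        refine monotone_nat_of_le_succ fun i => ?_
        refine OrderDual.toDual_le_toDual.2 (Submodule.map_mono ?_)
        rintro _ ⟨x, hx, rfl⟩
        refine ⟨T x, ?_, ?_⟩
        · have := op_FF h μ 1 k x hx
          simpa using this
        · rw [pow_succ, Module.End.mul_apply] }
  obtain ⟨M, hM⟩ := IsArtinian.monotone_stabilizes R
  have h1 := hM (M + N) (by omega)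
  have h1 : ((FF n k).map (T ^ M)).map (FF n (k + 1)).mkQ
      = ((FF n k).map (T ^ (M + N))).map (FF n (k + 1)).mkQ := h1
  have h2 : (FF n (k + 1)).mkQ ((T ^ M) ((T ^ N) f)) ∈
      ((FF n k).map (T ^ (M + N))).map (FF n (k + 1)).mkQ := by
    rw [← h1]
    exact ⟨_, ⟨_, hf, rfl⟩, rfl⟩
  obtain ⟨_, ⟨g, hg, rfl⟩, hgeq⟩ := h2
  refine ⟨f - g, ?_, M + N, ?_⟩
  · have := (FF n k).neg_mem hg
    simpa using this
  · rw [map_sub]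
    rw [Submodule.mkQ_apply, Submodule.mkQ_apply, eq_comm, Submodule.Quotient.eq] at hgeq
    rwa [← Module.End.mul_apply, ← pow_add] at hgeq

theorem lift_eig {n : ℕ} {δ : Fin n → FPS n} (h : VanishAt0 δ) (μ : ℂ) (v : FPS n) (N : ℕ)
    (hv : (op δ μ ^ N) v ∈ FF n 2) :
    ∃ y, y - v ∈ FF n 2 ∧ ∀ k, ∃ M, (op δ μ ^ M) y ∈ FF n k := by
  have step : ∀ k, ∀ a : {f : FPS n // ∃ M, (op δ μ ^ M) f ∈ FF n (k + 2)},
      ∃ b : {f : FPS n // ∃ M, (op δ μ ^ M) f ∈ FF n (k + 1 + 2)}, b.1 - a.1 ∈ FF n (k + 2) := by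
    rintro k ⟨f, M, hf⟩
    obtain ⟨g, hg, hM⟩ := fitting_step h μ _ _ _ hf
    exact ⟨⟨g, hM⟩, hg⟩
  choose nx hnx using step
  let s : ∀ k, {f : FPS n // ∃ M, (op δ μ ^ M) f ∈ FF n (k + 2)} :=
    fun k => Nat.rec ⟨v, N, hv⟩ nx k
  have hs : ∀ k, (s (k + 1)).1 - (s k).1 ∈ FF n (k + 2) := fun k => hnx k (s k)
  obtain ⟨y, hy⟩ := FF_limit (fun k => (s (k - 2)).1) (by
    intro k
    rcases k with _ | _ | k
    · exact FF_zero _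
    · simp
    · exact hs k)
  refine ⟨y, hy 2, fun k => ?_⟩
  obtain ⟨M, hM⟩ := (s k).2
  refine ⟨M, ?_⟩
  have h1 : (op δ μ ^ M) (y - (s k).1) ∈ FF n (k + 2) := op_FF h μ M _ _ (hy (k + 2))
  rw [map_sub] at h1
  have h2 := (FF n _).add_mem h1 hM
  rw [sub_add_cancel] at h2
  exact FF_anti (by omega) h2

/-- The chain rule. -/
theorem chain {n : ℕ} {δ : Fin n → FPS n} (h : VanishAt0 δ) (Ψ : FPS n →ₐ[ℂ] FPS n)
    (hΨ : ∀ k, ∀ f ∈ FF n k, Ψ f ∈ FF n k) (g : FPS n) :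
    vf δ (Ψ g) = ∑ j, vf δ (Ψ (X j)) * Ψ (pderiv ℂ j g) := by
  let E : FPS n →ₗ[ℂ] FPS n := (vf δ : FPS n →ₗ[ℂ] FPS n) ∘ₗ Ψ.toLinearMap
    - ∑ j, LinearMap.mulLeft ℂ (vf δ (Ψ (X j))) ∘ₗ Ψ.toLinearMap ∘ₗ
      (pderiv ℂ j : FPS n →ₗ[ℂ] FPS n)
  have hEa : ∀ f, E f = vf δ (Ψ f) - ∑ j, vf δ (Ψ (X j)) * Ψ (pderiv ℂ j f) := by
    intro f
    simp [E, LinearMap.sum_apply]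
  have hE : E = 0 := by
    apply lin_ext
    · intro k f hf
      rw [hEa]
      refine (FF n k).sub_mem (vf_FF h _ _ (hΨ _ _ (FF_anti (Nat.le_succ k) hf))) ?_
      refine Submodule.sum_mem _ fun j _ => FF_mul_left (hΨ _ _ (pderiv_FF j f hf))
    · intro m
      induction m using mono_ind with
      | h0 => rw [mono_zero, hEa]; simp
      | h1 m i ih =>
        have hX : E (X i) = 0 := by
          classical
          rw [hEa]
          have : ∀ j, Ψ (pderiv ℂ j (X i)) = if j = i then 1 else 0 := by
            intro j
            rw [pderiv_X, Pi.single_apply]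
            split_ifs <;> simp_all
          simp [this]
        have hmul : ∀ a b : FPS n, E (a * b) = E a * Ψ b + Ψ a * E b := by
          intro a b
          simp only [hEa, Derivation.leibniz, map_mul, map_add, smul_eq_mul, mul_add,
            Finset.sum_add_distrib, sub_mul, mul_sub, Finset.sum_mul, Finset.mul_sum]
          have e1 : ∀ j, vf δ (Ψ (X j)) * (Ψ a * Ψ (pderiv ℂ j b))
            = Ψ a * (vf δ (Ψ (X j)) * Ψ (pderiv ℂ j b)) := fun j => by ring
          have e2 : ∀ j, vf δ (Ψ (X j)) * (Ψ b * Ψ (pderiv ℂ j a))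
            = vf δ (Ψ (X j)) * Ψ (pderiv ℂ j a) * Ψ b := fun j => by ring
          simp only [e1, e2]
          ring
        rw [mono_succ, hmul, ih, hX]
        simp
  have h2 := hEa g
  rw [hE, LinearMap.zero_apply] at h2
  exact (sub_eq_zero.1 h2.symm)

/-- Linear coefficients. -/
def lin (n : ℕ) : FPS n →ₗ[ℂ] (Fin n → ℂ) := LinearMap.pi fun i => coeff (Finsupp.single i 1)

theorem lin_apply {n : ℕ} (f : FPS n) (i : Fin n) : lin n f i = coeff (Finsupp.single i 1) f := rfl

/-- Linear form. -/
def lf {n : ℕ} (c : Fin n → ℂ) : FPS n := ∑ i, c i • X i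

theorem lf_mem {n : ℕ} (c : Fin n → ℂ) : lf c ∈ FF n 1 :=
  Submodule.sum_mem _ fun i _ => (FF n 1).smul_mem _ (X_mem i)

theorem lin_lf {n : ℕ} (c : Fin n → ℂ) : lin n (lf c) = c := by
  classical
  ext i
  rw [lin_apply, lf, map_sum]
  simp [coeff_X, Finsupp.single_left_inj]

theorem lf_single {n : ℕ} (j : Fin n) : lf (Pi.single j 1) = (X j : FPS n) := by
  classical
  rw [lf]
  simp [Pi.single_apply]

theorem lin_X {n : ℕ} (j : Fin n) : lin n (X j) = Pi.single j 1 := by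
  rw [← lf_single, lin_lf]

theorem FF_two {n : ℕ} {f : FPS n} (h1 : f ∈ FF n 1) (h2 : lin n f = 0) : f ∈ FF n 2 := by
  intro m
  induction m using mono_ind with
  | h0 => intro _; exact h1 0 (by simp)
  | h1 m i _ =>
    intro hm
    rw [map_add, Finsupp.degree_single] at hm
    have : m = 0 := by
      rw [← Finsupp.degree_eq_zero_iff]; omega
    subst this
    rw [zero_add]
    exact congrFun h2 i

theorem lin_FF_two {n : ℕ} {f : FPS n} (h : f ∈ FF n 2) : lin n f = 0 := by
  ext i
  exact h _ (by rw [Finsupp.degree_single]; omega)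

theorem sub_lf {n : ℕ} {f : FPS n} (h : f ∈ FF n 1) : f - lf (lin n f) ∈ FF n 2 := by
  apply FF_two ((FF n 1).sub_mem h (lf_mem _))
  rw [map_sub, lin_lf, sub_self]

theorem lin_vf {n : ℕ} {δ : Fin n → FPS n} (h : VanishAt0 δ) {f : FPS n} (hf : f ∈ FF n 1) :
    lin n (vf δ f) = Matrix.toLin' (linPartPS δ) (lin n f) := by
  have h1 := lin_FF_two (vf_FF h _ _ (sub_lf hf))
  rw [map_sub, map_sub, sub_eq_zero] at h1
  rw [h1]
  ext i
  rw [Matrix.toLin'_apply]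
  simp only [lf, map_sum, Derivation.map_smul, vf_X, map_smul, Matrix.mulVec, dotProduct, linPartPS,
    Finset.sum_apply, Pi.smul_apply, smul_eq_mul, Matrix.of_apply]
  exact Finset.sum_congr rfl fun j _ => mul_comm _ _

theorem lin_op {n : ℕ} {δ : Fin n → FPS n} (h : VanishAt0 δ) (μ : ℂ) (N : ℕ) {f : FPS n}
    (hf : f ∈ FF n 1) :
    lin n ((op δ μ ^ N) f)
      = ((Matrix.toLin' (linPartPS δ) - μ • (1 : Module.End ℂ (Fin n → ℂ))) ^ N) (lin n f) := by
  induction N with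
  | zero => simp
  | succ N ih =>
    rw [pow_succ', pow_succ', Module.End.mul_apply, Module.End.mul_apply, ← ih, op_apply, map_sub,
      lin_vf h (op_FF h _ _ _ _ hf)]
    simp

theorem exists_basis {n : ℕ} (A : Matrix (Fin n) (Fin n) ℂ) (w : Fin n → ℂ)
    (hw : A.charpoly = ∏ i, (Polynomial.X - Polynomial.C (w i))) :
    ∃ b : Module.Basis (Fin n) ℂ (Fin n → ℂ), ∀ j, ∃ N,
      ((Matrix.toLin' A - w j • (1 : Module.End ℂ (Fin n → ℂ))) ^ N) (b j) = 0 := by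
  classical
  let φ : Module.End ℂ (Fin n → ℂ) := Matrix.toLin' A
  have hcp : φ.charpoly = ∏ i, (Polynomial.X - Polynomial.C (w i)) := by
    rw [← hw]
    exact Matrix.charpoly_toLin' A
  have hInternal : DirectSum.IsInternal (fun μ : ℂ => φ.maxGenEigenspace μ) := by
    rw [DirectSum.isInternal_submodule_iff_iSupIndep_and_iSup_eq_top]
    exact ⟨φ.independent_maxGenEigenspace, φ.iSup_maxGenEigenspace_eq_top⟩
  have hfr : ∀ μ : ℂ, Module.finrank ℂ (φ.maxGenEigenspace μ) = Fintype.card {i // w i = μ} := by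
    intro μ
    rw [LinearMap.finrank_maxGenEigenspace_eq, hcp, ← Polynomial.count_roots]
    have e : (∏ i, (Polynomial.X - Polynomial.C (w i)))
        = ((Finset.univ.val.map w).map fun a => Polynomial.X - Polynomial.C a).prod := by
      rw [Multiset.map_map]; rfl
    rw [e, Polynomial.roots_multiset_prod_X_sub_C, Multiset.count_map, Fintype.card_subtype,
      ← Finset.filter_val, Finset.card_val]
    simp only [eq_comm]
  let bb : ∀ μ : ℂ, Module.Basis {i // w i = μ} ℂ (φ.maxGenEigenspace μ) := fun μ =>
    (Module.finBasisOfFinrankEq ℂ _ (hfr μ)).reindex (Fintype.equivFin _).symm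
  let b := (hInternal.collectedBasis bb).reindex (Equiv.sigmaFiberEquiv w)
  refine ⟨b, fun j => ?_⟩
  have hb : b j ∈ φ.maxGenEigenspace (w j) := by
    have : b j = (bb (w j) ⟨j, rfl⟩ : Fin n → ℂ) := by
      simp [b, Equiv.sigmaFiberEquiv]
    rw [this]
    exact Subtype.property _
  rw [Module.End.mem_maxGenEigenspace] at hb
  exact hb

theorem lf_hom {n : ℕ} (P Q : Matrix (Fin n) (Fin n) ℂ) (hPQ : P * Q = 1)
    (L L' : FPS n →ₐ[ℂ] FPS n) (hL : ∀ j, L (X j) = lf (fun i => P i j))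
    (hL' : ∀ j, L' (X j) = lf (fun i => Q i j)) (j : Fin n) : L (L' (X j)) = X j := by
  rw [hL', ← lf_single]
  simp only [lf, map_sum, map_smul, hL, Finset.smul_sum, smul_smul]
  rw [Finset.sum_comm]
  refine Finset.sum_congr rfl fun l _ => ?_
  rw [← Finset.sum_smul]
  congr 1
  have := congrFun (congrFun hPQ l) j
  rw [Matrix.mul_apply, Matrix.one_apply] at this
  rw [Pi.single_apply, ← this]
  exact Finset.sum_congr rfl fun i _ => mul_comm _ _

theorem exists_equiv {n : ℕ} (P Q : Matrix (Fin n) (Fin n) ℂ) (hPQ : P * Q = 1) (hQP : Q * P = 1)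
    (y : Fin n → FPS n) (hy : ∀ j, y j - lf (fun i => P i j) ∈ FF n 2) :
    ∃ Ψ : FPS n ≃ₐ[ℂ] FPS n, (∀ j, Ψ (X j) = y j) ∧ (∀ k, ∀ f ∈ FF n k, Ψ f ∈ FF n k) ∧
      (∀ k, ∀ f ∈ FF n k, Ψ.symm f ∈ FF n k) := by
  have hy1 : ∀ j, y j ∈ FF n 1 := by
    intro j
    have := (FF n 1).add_mem (FF_anti (by omega) (hy j)) (lf_mem (fun i => P i j))
    simpa using this
  obtain ⟨Ψ, hΨX, hΨ⟩ := exists_subst y hy1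
  obtain ⟨L, hLX, hL⟩ := exists_subst (fun j => lf (fun i => P i j)) (fun j => lf_mem _)
  obtain ⟨L', hLX', hL'⟩ := exists_subst (fun j => lf (fun i => Q i j)) (fun j => lf_mem _)
  have h1 : L.comp L' = AlgHom.id ℂ (FPS n) := by
    refine hom_ext _ _ (fun k f hf => hL _ _ (hL' _ _ hf)) (fun k f hf => hf) fun j => ?_
    exact lf_hom P Q hPQ L L' hLX hLX' j
  have h1' : ∀ f, L (L' f) = f := fun f => DFunLike.congr_fun h1 f
  have h2 : L'.comp L = AlgHom.id ℂ (FPS n) := by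
    refine hom_ext _ _ (fun k f hf => hL' _ _ (hL _ _ hf)) (fun k f hf => hf) fun j => ?_
    exact lf_hom Q P hQP L' L hLX' hLX j
  have h2' : ∀ f, L' (L f) = f := fun f => DFunLike.congr_fun h2 f
  let U : FPS n →ₐ[ℂ] FPS n := L'.comp Ψ
  have hUX : ∀ j, U (X j) - X j ∈ FF n 2 := by
    intro j
    have e : U (X j) - X j = L' (y j - lf (fun i => P i j)) := by
      rw [map_sub, ← hLX j, h2', ← hΨX]
      rfl
    rw [e]
    exact hL' _ _ (hy j)
  have hU := unip U (fun k f hf => hL' _ _ (hΨ _ _ hf)) hUX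
  have hUΨ : ∀ f, Ψ f = L (U f) := fun f => (h1' _).symm
  have hmem : ∀ k f, Ψ f ∈ FF n k → f ∈ FF n k := fun k f hf =>
    tri_mem U.toLinearMap hU k f (hL' _ _ hf)
  have hbij : Function.Bijective Ψ := by
    constructor
    · rw [injective_iff_map_eq_zero]
      intro f hf
      exact FF_eq_zero fun k => hmem k f (by rw [hf]; exact (FF n k).zero_mem)
    · intro g
      obtain ⟨f, hf⟩ := tri_surj U.toLinearMap hU (L' g)
      refine ⟨f, ?_⟩
      rw [hUΨ, show U f = L' g from hf, h1']
  refine ⟨AlgEquiv.ofBijective Ψ hbij, hΨX, hΨ, fun k f hf => hmem k _ ?_⟩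
  have : Ψ ((AlgEquiv.ofBijective Ψ hbij).symm f) = f :=
    (AlgEquiv.ofBijective Ψ hbij).apply_symm_apply f
  rwa [this]

/-- weight of an exponent. -/
def wt {n : ℕ} (w : Fin n → ℂ) (m : Fin n →₀ ℕ) : ℂ := ∑ i, (m i : ℂ) * w i

theorem wt_single {n : ℕ} (w : Fin n → ℂ) (i : Fin n) : wt w (Finsupp.single i 1) = w i := by
  classical
  simp [wt, Finsupp.single_apply]

theorem wt_add {n : ℕ} (w : Fin n → ℂ) (a b : Fin n →₀ ℕ) : wt w (a + b) = wt w a + wt w b := by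
  simp [wt, add_mul, Finset.sum_add_distrib]

theorem mono_eig {n : ℕ} {d : Fin n → FPS n} (h : VanishAt0 d) (w : Fin n → ℂ) (k : ℕ)
    (hX : ∀ j, ∃ N, (op d (w j) ^ N) (X j) ∈ FF n k) (m : Fin n →₀ ℕ) :
    ∃ N, (op d (wt w m) ^ N) (monomial m 1) ∈ FF n k := by
  induction m using mono_ind with
  | h0 =>
    refine ⟨1, ?_⟩
    rw [mono_zero, pow_one, op_apply]
    simp [wt]
  | h1 m i ih =>
    obtain ⟨N, hN⟩ := ih
    obtain ⟨M, hM⟩ := hX i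
    refine ⟨N + M, ?_⟩
    rw [mono_succ, wt_add, wt_single]
    exact op_mul h _ _ k _ N M rfl _ _ hN hM

theorem resonant {n : ℕ} {d : Fin n → FPS n} (h : VanishAt0 d) (w : Fin n → ℂ) (lam : ℂ)
    (f : FPS n) (hX : ∀ k j, ∃ N, (op d (w j) ^ N) (X j) ∈ FF n k)
    (hf : ∀ k, ∃ N, (op d lam ^ N) f ∈ FF n k) (m : Fin n →₀ ℕ) (hm : wt w m ≠ lam) :
    coeff m f = 0 := by
  classical
  let k := m.degree + 1
  let D : Module.End ℂ (FPS n ⧸ FF n k) :=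
    (FF n k).mapQ (FF n k) (vf d : FPS n →ₗ[ℂ] FPS n) (fun f hf => vf_FF h k f hf)
  have hD : ∀ (μ : ℂ) (N : ℕ) (g : FPS n),
      ((D - μ • (1 : Module.End ℂ (FPS n ⧸ FF n k))) ^ N) ((FF n k).mkQ g) = (FF n k).mkQ ((op d μ ^ N) g) := by
    intro μ N g
    induction N with
    | zero => simp
    | succ N ih =>
      rw [pow_succ', pow_succ', Module.End.mul_apply, Module.End.mul_apply, ih, op_apply, map_sub]
      rfl
  have hV : ∀ (μ : ℂ) (g : FPS n), (∃ N, (op d μ ^ N) g ∈ FF n k) →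
      (FF n k).mkQ g ∈ D.maxGenEigenspace μ := by
    rintro μ g ⟨N, hN⟩
    rw [Module.End.mem_maxGenEigenspace]
    refine ⟨N, ?_⟩
    rw [hD]
    simpa using hN
  have hind := D.independent_maxGenEigenspace lam
  rw [Submodule.disjoint_def] at hind
  let S1 := (SS n k).filter fun e => wt w e ≠ lam
  let S0 := (SS n k).filter fun e => ¬ wt w e ≠ lam
  let G1 : FPS n := ∑ e ∈ S1, coeff e f • monomial e (1 : ℂ)
  let G0 : FPS n := ∑ e ∈ S0, coeff e f • monomial e (1 : ℂ)
  have hsum : f - (G1 + G0) ∈ FF n k := by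
    have := trunc_FF k f
    rwa [← Finset.sum_filter_add_sum_filter_not (SS n k) (fun e => wt w e ≠ lam)] at this
  have hG0 : (FF n k).mkQ G0 ∈ D.maxGenEigenspace lam := by
    rw [map_sum]
    refine Submodule.sum_mem _ fun e he => ?_
    rw [map_smul]
    refine Submodule.smul_mem _ _ ?_
    have he2 := (Finset.mem_filter.1 he).2
    rw [not_not] at he2
    rw [← he2]
    exact hV _ _ (mono_eig h w k (hX k) e)
  have hG1' : (FF n k).mkQ G1 ∈ ⨆ μ, ⨆ (_ : μ ≠ lam), D.maxGenEigenspace μ := by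
    rw [map_sum]
    refine Submodule.sum_mem _ fun e he => ?_
    rw [map_smul]
    refine Submodule.smul_mem _ _ ?_
    have he2 := (Finset.mem_filter.1 he).2
    exact (le_iSup₂ (f := fun (μ : ℂ) (_ : μ ≠ lam) => D.maxGenEigenspace μ) (wt w e) he2)
      (hV _ _ (mono_eig h w k (hX k) e))
  have hG1 : (FF n k).mkQ G1 ∈ D.maxGenEigenspace lam := by
    have e : (FF n k).mkQ G1 = (FF n k).mkQ f - (FF n k).mkQ G0 := by
      rw [← map_sub, Submodule.mkQ_apply, Submodule.mkQ_apply, eq_comm, Submodule.Quotient.eq]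
      convert hsum using 1
      abel
    rw [e]
    exact Submodule.sub_mem _ (hV _ _ (hf k)) hG0
  have h0 := hind _ hG1 hG1'
  have h0 : G1 ∈ FF n k := by simpa using h0
  have h1 := h0 m (Nat.lt_succ_self _)
  rw [coeff_sum_mono, if_pos] at h1
  · exact h1
  · exact Finset.mem_filter.2 ⟨mem_SS.2 (Nat.lt_succ_self _), hm⟩

theorem euler_vanish {n : ℕ} (w : Fin n → ℂ) : VanishAt0 (eulerPS w) := by
  intro j
  simp [eulerPS]

theorem coeff_euler {n : ℕ} (w : Fin n → ℂ) (f : FPS n) (m : Fin n →₀ ℕ) :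
    coeff m (vf (eulerPS w) f) = wt w m * coeff m f := by
  classical
  have hm : ∀ m : Fin n →₀ ℕ, vf (eulerPS w) (monomial m 1) = wt w m • monomial m 1 := by
    intro m
    induction m using mono_ind with
    | h0 => rw [mono_zero]; simp [wt]
    | h1 m i ih =>
      rw [mono_succ, Derivation.leibniz, ih, vf_X, wt_add, wt_single]
      simp only [eulerPS, smul_eq_mul, smul_eq_C_mul, map_add]
      ring
  have h1 := trunc_FF (m.degree + 1) f
  have h2 := vf_FF (euler_vanish w) _ _ h1 m (Nat.lt_succ_self _)
  rw [map_sub, map_sub, sub_eq_zero] at h2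
  rw [h2, map_sum]
  simp only [Derivation.map_smul, hm, smul_smul]
  rw [coeff_sum_mono, if_pos (mem_SS.2 (Nat.lt_succ_self _)), mul_comm]

theorem nilp {n : ℕ} (A : Matrix (Fin n) (Fin n) ℂ) (w : Fin n → ℂ)
    (hres : ∀ i j, w i ≠ w j → A i j = 0)
    (hA : ∀ j, ∃ N, ((Matrix.toLin' A - w j • (1 : Module.End ℂ (Fin n → ℂ))) ^ N)
      (Pi.single j 1) = 0) : IsNilpotent (A - Matrix.diagonal w) := by
  classical
  let B : Module.End ℂ (Fin n → ℂ) := Matrix.toLin' (A - Matrix.diagonal w)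
  let T : ℂ → Module.End ℂ (Fin n → ℂ) := fun μ => Matrix.toLin' A - μ • 1
  have key : ∀ N j, (B ^ N) (Pi.single j 1) = (T (w j) ^ N) (Pi.single j 1) ∧
      ∀ i, w i ≠ w j → (B ^ N) (Pi.single j 1) i = 0 := by
    intro N j
    induction N with
    | zero =>
      refine ⟨by simp, fun i hi => ?_⟩
      have : i ≠ j := fun h => hi (by rw [h])
      simp [this]
    | succ N ih =>
      obtain ⟨ih1, ih2⟩ := ih
      have hBi : ∀ v : Fin n → ℂ, (∀ i, w i ≠ w j → v i = 0) → B v = T (w j) v ∧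
          ∀ i, w i ≠ w j → B v i = 0 := by
        intro v hv
        have e : ∀ i, B v i = (A.mulVec v) i - w i * v i := by
          intro i
          simp [B, Matrix.mulVec_diagonal]
        constructor
        · ext i
          rw [e]
          simp only [T, LinearMap.sub_apply, Matrix.toLin'_apply, LinearMap.smul_apply,
            Module.End.one_apply, Pi.sub_apply, Pi.smul_apply, smul_eq_mul]
          by_cases hi : w i = w j
          · rw [hi]
          · rw [hv i hi]; simp
        · intro i hi
          rw [e, hv i hi, mul_zero, sub_zero, Matrix.mulVec, dotProduct]
          refine Finset.sum_eq_zero fun l _ => ?_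
          by_cases hl : w l = w j
          · rw [hres i l (by rw [hl]; exact hi), zero_mul]
          · rw [hv l hl, mul_zero]
      obtain ⟨h1, h2⟩ := hBi _ ih2
      rw [pow_succ', pow_succ', Module.End.mul_apply, Module.End.mul_apply, ← ih1]
      exact ⟨h1, h2⟩
  choose N hN using hA
  have hB : B ^ (∑ j, N j) = 0 := by
    refine (Pi.basisFun ℂ (Fin n)).ext fun j => ?_
    have hle : N j ≤ ∑ j, N j := Finset.single_le_sum (fun _ _ => Nat.zero_le _) (Finset.mem_univ j)
    rw [Pi.basisFun_apply, LinearMap.zero_apply, (key _ j).1, ← Nat.sub_add_cancel hle, pow_add,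
      Module.End.mul_apply]
    rw [show (T (w j) ^ N j) (Pi.single j 1) = 0 from hN j, map_zero]
  refine ⟨∑ j, N j, ?_⟩
  apply Matrix.toLin'.injective
  rw [Matrix.toLin'_pow, map_zero]
  exact hB

/-- Theorem 3.1 (a), the formal Poincaré–Dulac normal form: if `δ` is a formal vector
field with `δ(0) = 0` whose linear part has eigenvalues `w`, then after a formal change
of coordinates (a `ℂ`-algebra automorphism of `Ô_n` preserving the maximal ideal),
`δ = δ_S + δ_N` where `δ_S = Σ wᵢ xᵢ ∂ᵢ` and `δ_N` has nilpotent linear part and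
satisfies `[δ_S, δ_N] = 0`. -/
theorem formal_poincare_dulac (n : ℕ) (δ : Fin n → FPS n) (hδ0 : VanishAt0 δ)
    (w : Fin n → ℂ)
    (hw : (linPartPS δ).charpoly = ∏ i, (Polynomial.X - Polynomial.C (w i))) :
    ∃ Φ : FPS n ≃ₐ[ℂ] FPS n,
      (∀ g : FPS n, MvPowerSeries.constantCoeff g = 0 →
        MvPowerSeries.constantCoeff (Φ g) = 0) ∧
      ∃ δN : Fin n → FPS n,
        VanishAt0 δN ∧
        IsNilpotent (linPartPS δN) ∧
        CommutePS (eulerPS w) δN ∧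
        ∀ g : FPS n, Φ (applyPS δ (Φ.symm g)) =
          applyPS (eulerPS w) g + applyPS δN g := by
  classical
  obtain ⟨b, hb⟩ := exists_basis (linPartPS δ) w hw
  let P : Matrix (Fin n) (Fin n) ℂ := (Pi.basisFun ℂ (Fin n)).toMatrix b
  let Q : Matrix (Fin n) (Fin n) ℂ := b.toMatrix (Pi.basisFun ℂ (Fin n))
  have hPQ : P * Q = 1 := Module.Basis.toMatrix_mul_toMatrix_flip _ _
  have hQP : Q * P = 1 := Module.Basis.toMatrix_mul_toMatrix_flip _ _
  have hPb : ∀ j, (fun i => P i j) = b j := by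
    intro j
    ext i
    simp [P, Module.Basis.toMatrix_apply]
  have hex : ∀ j, ∃ y, y - lf (b j) ∈ FF n 2 ∧ ∀ k, ∃ M, (op δ (w j) ^ M) y ∈ FF n k := by
    intro j
    obtain ⟨N, hN⟩ := hb j
    refine lift_eig hδ0 (w j) (lf (b j)) N (FF_two (op_FF hδ0 _ _ _ _ (lf_mem _)) ?_)
    rw [lin_op hδ0 _ _ (lf_mem _), lin_lf, hN]
  choose y hy1 hy2 using hex
  obtain ⟨Ψ, hΨX, hΨ, hΨ'⟩ := exists_equiv P Q hPQ hQP y (by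
    intro j
    rw [hPb]
    exact hy1 j)
  let d : Fin n → FPS n := fun j => Ψ.symm (vf δ (y j))
  have hyF : ∀ j, y j ∈ FF n 1 := fun j => hΨX j ▸ hΨ 1 _ (X_mem j)
  have hd0 : VanishAt0 d := fun j => FF_one.1 (hΨ' _ _ (vf_FF hδ0 _ _ (hyF j)))
  have hconj : ∀ g, Ψ.symm (vf δ (Ψ g)) = vf d g := by
    intro g
    have := chain hδ0 (Ψ : FPS n →ₐ[ℂ] FPS n) hΨ g
    simp only [AlgEquiv.coe_toAlgHom] at this
    rw [this, map_sum, vf_apply]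
    refine Finset.sum_congr rfl fun j _ => ?_
    rw [map_mul, hΨX, AlgEquiv.symm_apply_apply]
  have hop : ∀ (μ : ℂ) (N : ℕ) (g : FPS n), (op d μ ^ N) g = Ψ.symm ((op δ μ ^ N) (Ψ g)) := by
    intro μ N g
    induction N with
    | zero => simp
    | succ N ih =>
      rw [pow_succ', pow_succ', Module.End.mul_apply, Module.End.mul_apply, ih, op_apply, op_apply,
        ← hconj, AlgEquiv.apply_symm_apply, map_sub, map_smul]
  have hX : ∀ k j, ∃ N, (op d (w j) ^ N) (X j) ∈ FF n k := by
    intro k j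
    obtain ⟨N, hN⟩ := hy2 j k
    refine ⟨N, ?_⟩
    rw [hop, hΨX]
    exact hΨ' _ _ hN
  have hres : ∀ j m, wt w m ≠ w j → coeff m (d j) = 0 := by
    intro j m hm
    refine resonant hd0 w (w j) (d j) hX (fun k => ?_) m hm
    obtain ⟨N, hN⟩ := hX k j
    refine ⟨N, ?_⟩
    rw [← vf_X d j, op_pow_vf]
    exact vf_FF hd0 _ _ hN
  have hEd : ∀ j, vf (eulerPS w) (d j) = w j • d j := by
    intro j
    ext m
    rw [coeff_euler, coeff_smul]
    by_cases hm : wt w m = w j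
    · rw [hm]
    · rw [hres j m hm, mul_zero, mul_zero]
  have heul : ∀ j, eulerPS w j = w j • (X j : FPS n) := fun j => by
    rw [smul_eq_C_mul]; rfl
  refine ⟨Ψ.symm, fun g hg => FF_one.1 (hΨ' _ _ (FF_one.2 hg)), fun j => d j - eulerPS w j,
    ?_, ?_, ?_, ?_⟩
  · intro j
    rw [map_sub, hd0 j, euler_vanish w j, sub_zero]
  · have hlin : linPartPS (fun j => d j - eulerPS w j) = linPartPS d - Matrix.diagonal w := by
      ext i j
      simp only [linPartPS, Matrix.of_apply, Matrix.sub_apply, map_sub, heul, map_smul,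
        smul_eq_mul, coeff_X, Finsupp.single_left_inj one_ne_zero, Matrix.diagonal_apply]
      by_cases hij : i = j
      · simp [hij]
      · simp [hij]
    rw [hlin]
    apply nilp
    · intro i j hij
      exact hres j _ (by rwa [wt_single])
    · intro j
      obtain ⟨N, hN⟩ := hX 2 j
      refine ⟨N, ?_⟩
      rw [← lin_X, ← lin_op hd0 _ _ (X_mem j)]
      exact lin_FF_two hN
  · intro j
    rw [applyPS_eq, applyPS_eq, map_sub, hEd, heul, Derivation.map_smul, Derivation.map_smul, vf_X,
      vf_X, heul, smul_sub]
  · intro g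
    rw [AlgEquiv.symm_symm, applyPS_eq, applyPS_eq, applyPS_eq, hconj, vf_apply, vf_apply, vf_apply,
      ← Finset.sum_add_distrib]
    refine Finset.sum_congr rfl fun j _ => ?_
    ring

end
end

section
/- Let w = (w_1,...,w_n) ∈ ℂ^n and let δ_S = Σ_{i=1}^n w_i x_i ∂_{x_i} on Ô_n = ℂ[[x_1,...,x_n]]. Then every ideal I ⊆ Ô_n with δ_S(I) ⊆ I admits a finite system of generators consisting of eigenfunctions of δ_S: there exist h_1,...,h_m ∈ Ô_n and d_1,...,d_m ∈ ℂ such that I = ⟨h_1,...,h_m⟩ and δ_S(h_i) = d_i h_i for i = 1,...,m. -/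
set_option maxHeartbeats 1000000
set_option synthInstance.maxHeartbeats 1000000

noncomputable section

namespace InvIdeal

open MvPowerSeries

/-- The weight of an exponent. -/
def wt {n : ℕ} (w : Fin n → ℂ) (m : Fin n →₀ ℕ) : ℂ := ∑ i, w i * (m i : ℂ)

/-- The eigencomponent of weight `a`. -/
def comp {n : ℕ} (w : Fin n → ℂ) (a : ℂ) (f : FPS n) : FPS n :=
  fun m => if wt w m = a then MvPowerSeries.coeff m f else 0

lemma coeff_comp {n : ℕ} (w : Fin n → ℂ) (a : ℂ) (f : FPS n) (m : Fin n →₀ ℕ) :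
    coeff m (comp w a f) = if wt w m = a then coeff m f else 0 := rfl

lemma coeff_fpd {n : ℕ} (i : Fin n) (f : FPS n) (m : Fin n →₀ ℕ) :
    coeff m (fpd i f) = ((m i : ℂ) + 1) * coeff (m + Finsupp.single i 1) f := rfl

lemma coeff_euler {n : ℕ} (w : Fin n → ℂ) (f : FPS n) (m : Fin n →₀ ℕ) :
    coeff m (applyPS (eulerPS w) f) = wt w m * coeff m f := by
  classical
  unfold applyPS eulerPS wt
  rw [map_sum, Finset.sum_mul]
  refine Finset.sum_congr rfl fun i _ => ?_
  rw [mul_assoc, coeff_C_mul, mul_assoc]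
  congr 1
  rw [X_def, coeff_monomial_mul]
  by_cases h : Finsupp.single i 1 ≤ m
  · rw [if_pos h, coeff_fpd, tsub_add_cancel_of_le h]
    have h1 : 1 ≤ m i := by simpa using h i
    simp [Nat.cast_sub h1]
  · rw [if_neg h]
    have h1 : m i = 0 := by
      by_contra h0
      exact h (by rw [Finsupp.single_le_iff]; omega)
    simp [h1]

lemma mem_pow_of_coeff {n : ℕ} (k : ℕ) (f : FPS n)
    (hf : ∀ m : Fin n →₀ ℕ, (∀ s, m s < k) → coeff m f = 0) :
    f ∈ (IsLocalRing.maximalIdeal (FPS n)) ^ k := by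
  classical
  let P : Fin n → (Fin n →₀ ℕ) → Prop := fun s m => ∃ h : ∃ t, k ≤ m t, h.choose = s
  let F : Fin n → FPS n := fun s m => if P s m then coeff m f else 0
  have hF : ∀ s m, coeff m (F s) = if P s m then coeff m f else 0 := fun _ _ => rfl
  have hsum : f = ∑ s, F s := by
    ext m
    rw [map_sum]
    simp only [hF]
    by_cases h : ∃ t, k ≤ m t
    · rw [Finset.sum_eq_single h.choose]
      · rw [if_pos ⟨h, rfl⟩]
      · rintro b - hb
        rw [if_neg]
        rintro ⟨_, h'⟩
        exact hb h'.symm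
      · simp
    · rw [hf m (by push Not at h; exact h)]
      simp
  rw [hsum]
  refine Ideal.sum_mem _ fun s _ => ?_
  have hd : (X s : FPS n) ^ k ∣ F s := by
    rw [X_pow_dvd_iff]
    intro m hm
    rw [hF, if_neg]
    rintro ⟨h, rfl⟩
    exact absurd h.choose_spec (by omega)
  refine Ideal.mem_of_dvd _ hd (Ideal.pow_mem_pow ?_ k)
  rw [IsLocalRing.mem_maximalIdeal, mem_nonunits_iff, isUnit_iff_constantCoeff]
  simp

lemma closed {n : ℕ} (J : Ideal (FPS n)) (f : FPS n)
    (h : ∀ k : ℕ, ∃ g ∈ J, ∀ m : Fin n →₀ ℕ, (∀ s, m s < k) → coeff m f = coeff m g) :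
    f ∈ J := by
  have hK : (⨅ i : ℕ, (IsLocalRing.maximalIdeal (FPS n)) ^ i • ⊤ :
      Submodule (FPS n) (FPS n ⧸ J)) = ⊥ :=
    Ideal.iInf_pow_smul_eq_bot_of_isLocalRing _ (IsLocalRing.maximalIdeal.isMaximal _).ne_top
  rw [← Ideal.Quotient.eq_zero_iff_mem, ← Submodule.mem_bot (FPS n), ← hK, Submodule.mem_iInf]
  intro k
  obtain ⟨g, hg, hfg⟩ := h k
  have h1 : f - g ∈ (IsLocalRing.maximalIdeal (FPS n)) ^ k :=
    mem_pow_of_coeff k _ fun m hm => by rw [map_sub, hfg m hm, sub_self]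
  have h2 : Ideal.Quotient.mk J f = (f - g) • (1 : FPS n ⧸ J) := by
    change _ = Ideal.Quotient.mk J ((f - g) * 1)
    rw [mul_one, map_sub,
      Ideal.Quotient.eq_zero_iff_mem.mpr hg, sub_zero]
  rw [h2]
  exact Submodule.smul_mem_smul h1 trivial

lemma poly_mem {n : ℕ} (w : Fin n → ℂ) (I : Ideal (FPS n))
    (hI : ∀ g ∈ I, applyPS (eulerPS w) g ∈ I) (f : FPS n) (hf : f ∈ I) (p : Polynomial ℂ) :
    ∃ g ∈ I, ∀ m, coeff m g = p.eval (wt w m) * coeff m f := by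
  induction p using Polynomial.induction_on with
  | C a => exact ⟨MvPowerSeries.C a * f, I.mul_mem_left _ hf, fun m => by simp⟩
  | add p q hp hq =>
    obtain ⟨g, hg, h1⟩ := hp
    obtain ⟨g', hg', h2⟩ := hq
    exact ⟨g + g', I.add_mem hg hg', fun m => by simp [h1, h2, add_mul]⟩
  | monomial j a hp =>
    obtain ⟨g, hg, h1⟩ := hp
    refine ⟨_, hI g hg, fun m => ?_⟩
    rw [coeff_euler, h1]
    simp only [Polynomial.eval_mul, Polynomial.eval_C, Polynomial.eval_pow, Polynomial.eval_X]
    ring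

lemma box_finite (n k : ℕ) : {m : Fin n →₀ ℕ | ∀ s, m s < k}.Finite := by
  refine (Set.finite_Iic (Finsupp.equivFunOnFinite.symm fun _ : Fin n => k)).subset ?_
  intro m hm s
  exact (hm s).le

lemma comp_mem {n : ℕ} (w : Fin n → ℂ) (I : Ideal (FPS n))
    (hI : ∀ g ∈ I, applyPS (eulerPS w) g ∈ I) (f : FPS n) (hf : f ∈ I) (a : ℂ) :
    comp w a f ∈ I := by
  classical
  refine closed I _ fun k => ?_
  let S : Finset ℂ := (box_finite n k).toFinset.image (wt w)
  obtain ⟨g, hg, h⟩ := poly_mem w I hI f hf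
    (Lagrange.interpolate S id (fun x => if x = a then 1 else 0))
  refine ⟨g, hg, fun m hm => ?_⟩
  have hS : wt w m ∈ S := Finset.mem_image_of_mem _ (by simpa using hm)
  have := Lagrange.eval_interpolate_at_node (v := id) (fun x : ℂ => if x = a then (1 : ℂ) else 0)
    (Set.injOn_id _) hS
  rw [id] at this
  rw [h, this, coeff_comp]
  split_ifs <;> simp

end InvIdeal

/-- Theorem 3.1 (d): any `δ_S`-invariant ideal of `Ô_n` admits a finite system of
generators which are eigenfunctions of `δ_S`, i.e. weighted homogeneous elements. -/
theorem invariant_ideal_weighted_homogeneous_generators (n : ℕ) (w : Fin n → ℂ)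
    (I : Ideal (FPS n)) (hI : ∀ g ∈ I, applyPS (eulerPS w) g ∈ I) :
    ∃ (m : ℕ) (h : Fin m → FPS n) (d : Fin m → ℂ),
      I = Ideal.span (Set.range h) ∧
      ∀ i, applyPS (eulerPS w) (h i) = MvPowerSeries.C (d i) * h i := by
  classical
  let T : Set (FPS n) := {g | g ∈ I ∧ ∃ d : ℂ, applyPS (eulerPS w) g = MvPowerSeries.C d * g}
  have hT : I = Ideal.span T := by
    apply le_antisymm
    · intro f hf
      refine InvIdeal.closed _ f fun k => ?_
      let S : Finset ℂ := (InvIdeal.box_finite n k).toFinset.image (InvIdeal.wt w)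
      refine ⟨∑ a ∈ S, InvIdeal.comp w a f, Ideal.sum_mem _ fun a _ => Ideal.subset_span
        ⟨InvIdeal.comp_mem w I hI f hf a, a, ?_⟩, fun m hm => ?_⟩
      · ext m
        rw [InvIdeal.coeff_euler, MvPowerSeries.coeff_C_mul, InvIdeal.coeff_comp]
        split_ifs with h
        · rw [h]
        · simp
      · have hS : InvIdeal.wt w m ∈ S := Finset.mem_image_of_mem _ (by simpa using hm)
        simp [InvIdeal.coeff_comp, hS]
    · rw [Ideal.span_le]
      exact fun g hg => hg.1
  have hfg : (Submodule.span (FPS n) T).FG := IsNoetherian.noetherian _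
  obtain ⟨s, hs, hs'⟩ := (Submodule.fg_span_iff_fg_span_finset_subset T).1 hfg
  have hd : ∀ i : Fin s.card, ∃ d : ℂ, applyPS (eulerPS w) (s.equivFin.symm i : FPS n) =
      MvPowerSeries.C d * (s.equivFin.symm i : FPS n) := fun i =>
    (hs (s.equivFin.symm i).2).2
  choose d hd using hd
  refine ⟨s.card, fun i => (s.equivFin.symm i : FPS n), d, ?_, hd⟩
  have hr : Set.range (fun i => (s.equivFin.symm i : FPS n)) = (s : Set (FPS n)) := by
    ext x
    constructor
    · rintro ⟨i, rfl⟩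
      exact (s.equivFin.symm i).2
    · intro hx
      exact ⟨s.equivFin ⟨x, hx⟩, by simp⟩
  rw [hr, hT]
  exact hs'

end
end
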